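/- arXiv:0706.0225 — 6 statements merged into one kernel-verified Lean document; each statement's English description precedes it below -/
import Mathlib

section
/- Let ρ > 0 and 0 < λ < 1. Then ∫₀^∞ (1+ρx)^{-λ} e^{-x} dx = Γ(1-λ) ρ^{-λ} e^{1/ρ} - (1/(ρ(1-λ))) · Σ_{k=0}^∞ ρ^{-k} / Π_{j=0}^{k-1} (2-λ+j), where Γ is the Gamma function and the series converges. (The series equals the confluent hypergeometric function ₁F₁(1; 2-λ; 1/ρ).) -/
open MeasureTheory Real Set

/-!
With `s = 1 - λ` and `a = 1 / ρ`, substituting `u = x + a` turns the integral into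
`ρ ^ (-λ) * exp a` times the upper incomplete Gamma integral `Γ(s) - γ(s, a)`. To expand
`γ(s, a) = ∫₀ᵃ u ^ (s - 1) * exp (-u) du`, write `exp (-u) = exp (-a) * exp (a - u)` and integrate
the exponential series of `exp (a - u)` term by term; each term is a Beta integral with one
argument a positive integer, hence explicit.
-/

theorem setIntegral_Ioi_comp_add_right {E : Type*} [NormedAddCommGroup E] [NormedSpace ℝ E]
    (f : ℝ → E) (a b : ℝ) : ∫ x in Ioi a, f (x + b) = ∫ x in Ioi (a + b), f x := by
  simpa only [preimage_add_const_Ioi, add_sub_cancel_right] using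
    (measurePreserving_add_right volume b).setIntegral_preimage_emb
      (measurableEmbedding_addRight b) f (Ioi (a + b))

section PartialGamma

open Complex (partialGamma)
open scoped Nat

variable {s : ℂ} {a : ℝ}

theorem integral_Ioi_exp_neg_mul_cpow (hs : 0 < s.re) (ha : 0 ≤ a) :
    ∫ x : ℝ in Ioi a, (Real.exp (-x) : ℂ) * (x : ℂ) ^ (s - 1) =
      Complex.Gamma s - partialGamma s a := by
  rw [Complex.Gamma_eq_integral hs, partialGamma, Complex.GammaIntegral,
    ← intervalIntegral.integral_Ioi_sub_Ioi (Complex.GammaIntegral_convergent hs) ha,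
    sub_sub_cancel]

theorem hasSum_integral_cpow_mul_sub_pow_div_factorial (hs : 0 < s.re) (ha : 0 ≤ a) :
    HasSum (fun k : ℕ ↦ ∫ x in 0..a, (x : ℂ) ^ (s - 1) * ((a - x) ^ k / k !))
      (Real.exp a * partialGamma s a) := by
  have h_int : IntervalIntegrable (fun x : ℝ ↦ (x : ℂ) ^ (s - 1)) volume 0 a :=
    intervalIntegral.intervalIntegrable_cpow' (by simpa using hs)
  have h_sum (x : ℝ) : HasSum (fun k : ℕ ↦ (x : ℂ) ^ (s - 1) * ((a - x) ^ k / k !))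
      (Real.exp a * (Real.exp (-x) * (x : ℂ) ^ (s - 1))) := by
    have h_exp : (Real.exp a : ℂ) * (Real.exp (-x) * (x : ℂ) ^ (s - 1)) =
        (x : ℂ) ^ (s - 1) * NormedSpace.exp (a - x : ℂ) := by
      rw [← Complex.exp_eq_exp_ℂ, ← mul_assoc, mul_comm, ← Complex.ofReal_mul, ← Real.exp_add,
        ← sub_eq_add_neg, Complex.ofReal_exp, Complex.ofReal_sub]
    rw [h_exp]
    exact (NormedSpace.expSeries_div_hasSum_exp (a - x : ℂ)).mul_left _
  rw [partialGamma, ← intervalIntegral.integral_const_mul]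
  refine intervalIntegral.hasSum_integral_of_dominated_convergence
    (fun k x ↦ ‖(x : ℂ) ^ (s - 1)‖ * (a ^ k / k !)) (fun k ↦ ?_) (fun k ↦ ?_)
    (.of_forall fun x _ ↦ (Real.summable_pow_div_factorial a).mul_left _) ?_
    (.of_forall fun x _ ↦ h_sum x)
  · have h_cont : ContinuousOn (fun x : ℝ ↦ ((a - x) ^ k / k ! : ℂ)) (uIcc 0 a) := by fun_prop
    exact (h_int.mul_continuousOn h_cont).def'.aestronglyMeasurable
  · refine .of_forall fun x hx ↦ ?_
    rw [uIoc_of_le ha] at hx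
    rw [norm_mul, norm_div, norm_pow, Complex.norm_natCast, ← Complex.ofReal_sub,
      Complex.norm_of_nonneg (sub_nonneg.2 hx.2)]
    gcongr
    · exact sub_nonneg.2 hx.2
    · exact sub_le_self a hx.1.le
  · simpa only [tsum_mul_left] using h_int.norm.mul_const _

theorem integral_cpow_mul_sub_pow_div_factorial (hs : 0 < s.re) (ha : 0 < a) (k : ℕ) :
    ∫ x in 0..a, (x : ℂ) ^ (s - 1) * ((a - x) ^ k / k !) =
      (a : ℂ) ^ s / s * (a ^ k / ∏ j ∈ Finset.range k, (s + 1 + j)) := by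
  have ha' : (a : ℂ) ≠ 0 := Complex.ofReal_ne_zero.2 ha.ne'
  have h_beta : ∫ x in 0..a, (x : ℂ) ^ (s - 1) * (a - x) ^ k =
      (a : ℂ) ^ (s + k) * (k ! / ∏ j ∈ Finset.range (k + 1), (s + j)) := by
    have h := Complex.betaIntegral_scaled s (k + 1) ha
    simpa only [Complex.betaIntegral_eval_nat_add_one_right hs, ← add_assoc, add_sub_cancel_right,
      Complex.cpow_natCast] using h
  have h_prod : ∏ j ∈ Finset.range (k + 1), (s + j) = s * ∏ j ∈ Finset.range k, (s + 1 + j) := by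
    simp only [Finset.prod_range_succ', Nat.cast_zero, add_zero, Nat.cast_add_one, mul_comm s,
      add_right_comm, add_assoc]
  have h_fact : (k ! : ℂ) ≠ 0 := Nat.cast_ne_zero.2 k.factorial_ne_zero
  simp only [← mul_div_assoc, intervalIntegral.integral_div, h_beta, h_prod,
    Complex.cpow_add _ _ ha', Complex.cpow_natCast]
  field_simp

theorem hasSum_pow_div_prod_partialGamma (hs : 0 < s.re) (ha : 0 < a) :
    HasSum (fun k : ℕ ↦ (a : ℂ) ^ k / ∏ j ∈ Finset.range k, (s + 1 + j))
      (s / a ^ s * (Real.exp a * partialGamma s a)) := by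
  have hs' : s ≠ 0 := fun h ↦ hs.ne (congrArg Complex.re h).symm
  have ha' : (a : ℂ) ^ s ≠ 0 :=
    Complex.cpow_ne_zero_iff.2 (.inl (Complex.ofReal_ne_zero.2 ha.ne'))
  have h_terms := hasSum_integral_cpow_mul_sub_pow_div_factorial hs ha.le
  refine (h_terms.mul_left (s / a ^ s)).congr_fun fun k ↦ ?_
  rw [integral_cpow_mul_sub_pow_div_factorial hs ha]
  field_simp

end PartialGamma

theorem integral_one_add_mul_cpow_mul_exp_neg {ρ : ℝ} (hρ : 0 < ρ) (w : ℂ) :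
    ∫ x : ℝ in Ioi 0, (1 + ρ * x : ℂ) ^ w * Real.exp (-x) =
      ρ ^ w * Real.exp ρ⁻¹ * ∫ x : ℝ in Ioi ρ⁻¹, (Real.exp (-x) : ℂ) * (x : ℂ) ^ w := by
  have h_shift := setIntegral_Ioi_comp_add_right
    (fun x : ℝ ↦ (Real.exp (-x) : ℂ) * (x : ℂ) ^ w) 0 ρ⁻¹
  rw [zero_add] at h_shift
  rw [← h_shift, ← integral_const_mul]
  refine setIntegral_congr_fun measurableSet_Ioi fun x (hx : 0 < x) ↦ ?_
  have h_base : (1 + ρ * x : ℂ) = (ρ : ℂ) * (x + ρ⁻¹ : ℝ) := by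
    have h_real : 1 + ρ * x = ρ * (x + ρ⁻¹) := by rw [mul_add, mul_inv_cancel₀ hρ.ne', add_comm]
    exact_mod_cast h_real
  have h_exp : Real.exp (-x) = Real.exp ρ⁻¹ * Real.exp (-(x + ρ⁻¹)) := by
    rw [← Real.exp_add, neg_add_rev, add_neg_cancel_left]
  simp only [h_base, h_exp, Complex.ofReal_mul,
    Complex.mul_cpow_ofReal_nonneg hρ.le (by positivity : 0 ≤ x + ρ⁻¹)]
  ring

theorem siso_distortion_gamma_hypergeom_general (ρ : ℝ) (l : ℂ) (hρ : 0 < ρ) (hl : l.re < 1) :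
    Summable (fun k : ℕ ↦ (ρ : ℂ) ^ (-(k : ℂ)) / ∏ j ∈ Finset.range k, (2 - l + j)) ∧
    (∫ x : ℝ in Ioi 0, (1 + ρ * x : ℂ) ^ (-l) * Real.exp (-x)) =
      Complex.Gamma (1 - l) * ρ ^ (-l) * Real.exp (1 / ρ) -
        (1 / (ρ * (1 - l))) *
          ∑' k : ℕ, (ρ : ℂ) ^ (-(k : ℂ)) / ∏ j ∈ Finset.range k, (2 - l + j) := by
  have hs : 0 < (1 - l).re := by simpa using hl
  have hρ' : (ρ : ℂ) ≠ 0 := Complex.ofReal_ne_zero.2 hρ.ne'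
  have hl' : 1 - l ≠ 0 := fun h ↦ hs.ne (congrArg Complex.re h).symm
  have h_series : HasSum (fun k : ℕ ↦ (ρ : ℂ) ^ (-(k : ℂ)) / ∏ j ∈ Finset.range k, (2 - l + j))
      ((1 - l) * ρ * ρ ^ (-l) * (Real.exp ρ⁻¹ * Complex.partialGamma (1 - l) ρ⁻¹)) := by
    have h_inv : (ρ⁻¹ : ℂ) ^ (1 - l) = (ρ * (ρ : ℂ) ^ (-l))⁻¹ := by
      rw [Complex.inv_cpow _ _ (by simp [Complex.arg_ofReal_of_nonneg hρ.le, pi_ne_zero.symm]),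
        sub_eq_add_neg, Complex.cpow_add _ _ hρ', Complex.cpow_one]
    have h := hasSum_pow_div_prod_partialGamma hs (inv_pos.2 hρ)
    rw [Complex.ofReal_inv, h_inv, div_inv_eq_mul, ← mul_assoc (1 - l)] at h
    convert! h using 4 with k
    · rw [Complex.cpow_neg, Complex.cpow_natCast, inv_pow]
    · ring
  refine ⟨h_series.summable, ?_⟩
  have h_upper := integral_Ioi_exp_neg_mul_cpow hs (inv_nonneg.2 hρ.le)
  rw [sub_sub_cancel_left] at h_upper
  rw [integral_one_add_mul_cpow_mul_exp_neg hρ, h_upper, h_series.tsum_eq, one_div ρ]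
  field_simp

theorem ofReal_integral_one_add_mul_rpow_mul_exp_neg {ρ : ℝ} (hρ : 0 ≤ ρ) (w : ℝ) :
    ((∫ x in Ioi (0 : ℝ), (1 + ρ * x) ^ w * Real.exp (-x) : ℝ) : ℂ) =
      ∫ x : ℝ in Ioi 0, (1 + ρ * x : ℂ) ^ (w : ℂ) * Real.exp (-x) := by
  rw [← integral_complex_ofReal]
  refine setIntegral_congr_fun measurableSet_Ioi fun x (hx : 0 < x) ↦ ?_
  push_cast [Complex.ofReal_cpow (by positivity : 0 ≤ 1 + ρ * x)]
  rfl

/-- For `ρ > 0` and `0 < λ < 1`,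
`∫₀^∞ (1+ρx)^{-λ} e^{-x} dx
  = Γ(1-λ) ρ^{-λ} e^{1/ρ} - (1/(ρ(1-λ))) · Σ_{k=0}^∞ ρ^{-k} / Π_{j=0}^{k-1}(2-λ+j)`,
where the series (equal to `₁F₁(1; 2-λ; 1/ρ)`) converges. -/
theorem siso_distortion_gamma_hypergeom (ρ l : ℝ) (hρ : 0 < ρ) (hl0 : 0 < l) (hl1 : l < 1) :
    Summable (fun k : ℕ => ρ ^ (-(k:ℝ)) / ∏ j ∈ Finset.range k, (2 - l + (j:ℝ))) ∧
    (∫ x in Ioi (0:ℝ), (1 + ρ * x) ^ (-l) * Real.exp (-x)) =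
      Real.Gamma (1 - l) * ρ ^ (-l) * Real.exp (1 / ρ) -
        (1 / (ρ * (1 - l))) *
          ∑' k : ℕ, ρ ^ (-(k:ℝ)) / ∏ j ∈ Finset.range k, (2 - l + (j:ℝ)) := by
  simpa [← Complex.summable_ofReal, ← Complex.ofReal_inj, Complex.ofReal_tsum, Complex.cpow_neg,
    ofReal_integral_one_add_mul_rpow_mul_exp_neg hρ.le, Complex.ofReal_cpow hρ.le,
    ← Complex.Gamma_ofReal] using siso_distortion_gamma_hypergeom_general ρ l hρ hl1
end

section
/- Let ρ > 0 and 0 < λ < 1. Then ∫₀^∞ (1+ρx)^{-λ} e^{-x} dx ≤ (e^{1/ρ} - 1)/(λ - 1) + Γ(1-λ) ρ^{-λ} e^{1/ρ}, where Γ is the Gamma function. (This is the finite-delay upper bound underlying Theorem 2, obtained by lower-bounding ₁F₁(1;2-λ;1/ρ) by (e^{1/ρ}-1)ρ; note the first term on the right is negative.) -/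
open MeasureTheory Real Set

/-! With `s = 1 - λ` and `a = 1 / ρ`, the substitution `t = x + a` turns the integral into
`ρ ^ (-λ) * e ^ a` times the upper incomplete Gamma function
`Γ(s, a) = Γ(s) - ∫ t in 0..a, e ^ (-t) * t ^ (s - 1)`. As `s ≤ 1`, both factors of the last
integrand are antitone, so Chebyshev's integral inequality bounds it below by the product of
the integrals of the factors divided by `a`, and both of these are elementary. -/

section Integral

variable {α : Type*} [MeasurableSpace α] {μ : Measure α} {s : Set α} {f g : α → ℝ}

lemma integral_sub_mul_sub_const [IsFiniteMeasure μ] (hf : Integrable f μ) (hg : Integrable g μ)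
    (hfg : Integrable (fun x ↦ f x * g x) μ) (b c : ℝ) :
    ∫ x, (f x - b) * (g x - c) ∂μ =
      (∫ x, f x * g x ∂μ) - c * (∫ x, f x ∂μ) - b * (∫ x, g x ∂μ) + μ.real univ * (b * c) := by
  have expand (x : α) : (f x - b) * (g x - c) = f x * g x - c * f x - b * g x + b * c := by ring
  simp only [expand]
  rw [integral_add (by fun_prop) (by fun_prop), integral_sub (by fun_prop) (by fun_prop),
    integral_sub hfg (by fun_prop), integral_const_mul, integral_const_mul, integral_const,
    smul_eq_mul]

/-- **Chebyshev's integral inequality**: integrate `0 ≤ (f x - f y) * (g x - g y)` over `x`, then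
over `y`. -/
theorem setIntegral_mul_setIntegral_le_of_monovaryOn (hs : MeasurableSet s) (hμs : μ s ≠ ⊤)
    (hf : IntegrableOn f s μ) (hg : IntegrableOn g s μ)
    (hfg : IntegrableOn (fun x ↦ f x * g x) s μ) (h : MonovaryOn f g s) :
    (∫ x in s, f x ∂μ) * ∫ x in s, g x ∂μ ≤ μ.real s * ∫ x in s, f x * g x ∂μ := by
  rw [IntegrableOn] at hf hg hfg
  have : IsFiniteMeasure (μ.restrict s) := isFiniteMeasure_restrict.2 hμs
  have inner_nonneg (y : α) (hy : y ∈ s) : 0 ≤ ∫ x in s, (f x - f y) * (g x - g y) ∂μ :=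
    setIntegral_nonneg hs fun x hx ↦ h.sub_mul_sub_nonneg hy hx
  have double_nonneg := setIntegral_nonneg (μ := μ) hs inner_nonneg
  simp only [integral_sub_mul_sub_const hf hg hfg, measureReal_restrict_apply_univ]
    at double_nonneg
  rw [integral_add (by fun_prop) (by fun_prop), integral_sub (by fun_prop) (by fun_prop),
    integral_sub (by fun_prop) (by fun_prop), integral_mul_const, integral_mul_const,
    integral_const_mul, integral_const, measureReal_restrict_apply_univ, smul_eq_mul]
    at double_nonneg
  linarith

lemma integral_comp_add_right_Ioi {E : Type*} [NormedAddCommGroup E] [NormedSpace ℝ E]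
    (F : ℝ → E) (b c : ℝ) : ∫ x in Ioi b, F (x + c) = ∫ x in Ioi (b + c), F x := by
  simpa only [preimage_add_const_Ioi, add_sub_cancel_right] using
    (measurePreserving_add_right volume c).setIntegral_preimage_emb
      (measurableEmbedding_addRight c) F (Ioi (b + c))

end Integral

section IncompleteGamma

/-- The unnormalised lower incomplete Gamma function `γ(s, a)`, the part of Euler's integral for
`Γ(s)` that Chebyshev's inequality estimates; meaningful for `0 < s` and `0 ≤ a`. -/
noncomputable def lowerIncompleteGamma (s a : ℝ) : ℝ :=
  ∫ t in (0 : ℝ)..a, exp (-t) * t ^ (s - 1)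

/-- The unnormalised upper incomplete Gamma function `Γ(s, a)`, in terms of which the distortion
integral has a closed form; meaningful for all real `s` when `0 < a`. -/
noncomputable def upperIncompleteGamma (s a : ℝ) : ℝ :=
  ∫ t in Ioi a, exp (-t) * t ^ (s - 1)

variable {s a : ℝ}

lemma lowerIncompleteGamma_add_upperIncompleteGamma (hs : 0 < s) (ha : 0 ≤ a) :
    lowerIncompleteGamma s a + upperIncompleteGamma s a = Gamma s := by
  have hconv := GammaIntegral_convergent hs
  rw [Gamma_eq_integral hs]
  exact intervalIntegral.integral_interval_add_Ioi hconv (hconv.mono_set (Ioi_subset_Ioi ha))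

lemma intervalIntegral_exp_neg (b c : ℝ) : ∫ t in b..c, exp (-t) = exp (-b) - exp (-c) := by
  rw [intervalIntegral.integral_comp_neg (fun t ↦ exp t), integral_exp]

lemma monovaryOn_exp_neg_rpow (hs : s ≤ 1) :
    MonovaryOn (fun t : ℝ ↦ exp (-t)) (fun t ↦ t ^ (s - 1)) (Ioi 0) :=
  AntitoneOn.monovaryOn (fun _ _ _ _ hxy ↦ exp_le_exp.2 (neg_le_neg hxy))
    (antitoneOn_rpow_Ioi_of_exponent_nonpos (sub_nonpos.2 hs))

lemma one_sub_exp_neg_mul_rpow_div_le_mul_lowerIncompleteGamma (hs0 : 0 < s) (hs1 : s ≤ 1)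
    (ha : 0 ≤ a) : (1 - exp (-a)) * (a ^ s / s) ≤ a * lowerIncompleteGamma s a := by
  have hexp : IntervalIntegrable (fun t : ℝ ↦ exp (-t)) volume 0 a :=
    Continuous.intervalIntegrable (by fun_prop) _ _
  have hpow : IntervalIntegrable (fun t : ℝ ↦ t ^ (s - 1)) volume 0 a :=
    intervalIntegral.intervalIntegrable_rpow' (by linarith)
  have hprod : IntervalIntegrable (fun t : ℝ ↦ exp (-t) * t ^ (s - 1)) volume 0 a :=
    hpow.continuousOn_mul (by fun_prop)
  have integral_rpow_eq : ∫ t in (0 : ℝ)..a, t ^ (s - 1) = a ^ s / s := by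
    rw [integral_rpow (Or.inl (by linarith)), sub_add_cancel, zero_rpow hs0.ne', sub_zero]
  have chebyshev := setIntegral_mul_setIntegral_le_of_monovaryOn measurableSet_Ioc
    measure_Ioc_lt_top.ne hexp.1 hpow.1 hprod.1
    ((monovaryOn_exp_neg_rpow hs1).subset Ioc_subset_Ioi_self)
  simpa only [← intervalIntegral.integral_of_le ha, intervalIntegral_exp_neg, integral_rpow_eq,
    neg_zero, exp_zero, volume_real_Ioc_of_le ha, sub_zero, lowerIncompleteGamma] using chebyshev

theorem upperIncompleteGamma_le_Gamma_sub (hs0 : 0 < s) (hs1 : s ≤ 1) (ha : 0 < a) :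
    upperIncompleteGamma s a ≤ Gamma s - (1 - exp (-a)) * a ^ (s - 1) / s := by
  have hlower : (1 - exp (-a)) * a ^ (s - 1) / s ≤ lowerIncompleteGamma s a := by
    refine le_of_mul_le_mul_left ?_ ha
    calc a * ((1 - exp (-a)) * a ^ (s - 1) / s)
        = (1 - exp (-a)) * (a ^ s / s) := by rw [rpow_sub_one ha.ne']; field_simp
      _ ≤ a * lowerIncompleteGamma s a :=
        one_sub_exp_neg_mul_rpow_div_le_mul_lowerIncompleteGamma hs0 hs1 ha.le
  linarith [lowerIncompleteGamma_add_upperIncompleteGamma hs0 ha.le]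

lemma integral_one_add_mul_rpow_mul_exp_neg {ρ : ℝ} (hρ : 0 < ρ) (s : ℝ) :
    ∫ x in Ioi (0 : ℝ), (1 + ρ * x) ^ (s - 1) * exp (-x) =
      ρ ^ (s - 1) * exp (1 / ρ) * upperIncompleteGamma s (1 / ρ) := by
  have integrand_eq (x : ℝ) (hx : x ∈ Ioi 0) : (1 + ρ * x) ^ (s - 1) * exp (-x) =
      ρ ^ (s - 1) * exp (1 / ρ) * (exp (-(x + 1 / ρ)) * (x + 1 / ρ) ^ (s - 1)) := by
    have hx_nonneg : 0 ≤ x + 1 / ρ := add_nonneg (le_of_lt hx) (by positivity)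
    have hbase : 1 + ρ * x = ρ * (x + 1 / ρ) := by field_simp; ring
    have hexp : exp (-x) = exp (1 / ρ) * exp (-(x + 1 / ρ)) := by rw [← exp_add]; ring_nf
    rw [hbase, mul_rpow hρ.le hx_nonneg, hexp]
    ring
  rw [setIntegral_congr_fun measurableSet_Ioi integrand_eq, integral_const_mul,
    integral_comp_add_right_Ioi (fun t ↦ exp (-t) * t ^ (s - 1)), zero_add, upperIncompleteGamma]

end IncompleteGamma

/-- For `ρ > 0` and `0 < λ < 1`,
`∫₀^∞ (1+ρx)^{-λ} e^{-x} dx ≤ (e^{1/ρ} - 1)/(λ - 1) + Γ(1-λ) ρ^{-λ} e^{1/ρ}`.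
This is the finite-delay upper bound underlying Theorem 2. -/
theorem siso_distortion_upper_bound (ρ l : ℝ) (hρ : 0 < ρ) (hl0 : 0 < l) (hl1 : l < 1) :
    (∫ x in Ioi (0:ℝ), (1 + ρ * x) ^ (-l) * Real.exp (-x)) ≤
      (Real.exp (1 / ρ) - 1) / (l - 1) + Real.Gamma (1 - l) * ρ ^ (-l) * Real.exp (1 / ρ) := by
  have hs : -l = 1 - l - 1 := by ring
  have hpow : ρ ^ (-l) * (1 / ρ) ^ (-l) = 1 := by
    rw [← mul_rpow hρ.le (by positivity), mul_one_div_cancel hρ.ne', one_rpow]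
  have hexp : exp (1 / ρ) * exp (-(1 / ρ)) = 1 := by rw [← exp_add, add_neg_cancel, exp_zero]
  calc ∫ x in Ioi (0 : ℝ), (1 + ρ * x) ^ (-l) * exp (-x)
      = ρ ^ (-l) * exp (1 / ρ) * upperIncompleteGamma (1 - l) (1 / ρ) := by
        rw [hs, integral_one_add_mul_rpow_mul_exp_neg hρ]
    _ ≤ ρ ^ (-l) * exp (1 / ρ) *
          (Gamma (1 - l) - (1 - exp (-(1 / ρ))) * (1 / ρ) ^ (-l) / (1 - l)) := by
        rw [hs]
        gcongr
        exact upperIncompleteGamma_le_Gamma_sub (by linarith) (by linarith) (by positivity)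
    _ = Gamma (1 - l) * ρ ^ (-l) * exp (1 / ρ) -
          (ρ ^ (-l) * (1 / ρ) ^ (-l)) *
            (exp (1 / ρ) - exp (1 / ρ) * exp (-(1 / ρ))) / (1 - l) := by ring
    _ = (exp (1 / ρ) - 1) / (l - 1) + Gamma (1 - l) * ρ ^ (-l) * exp (1 / ρ) := by
        rw [hpow, hexp, one_mul, ← neg_sub l 1, div_neg, sub_neg_eq_add, add_comm]
end

section
/- Fix ρ > 0 and let f(λ) = (e^{1/ρ} - 1)/(λ - 1) + Γ(1-λ) ρ^{-λ} e^{1/ρ} for 0 < λ < 1, where Γ is the Gamma function. Then as λ → 0⁺, f(λ)^{1/λ} converges to exp(1 - e^{1/ρ}(1 - γ + ln ρ)), where γ is the Euler–Mascheroni constant. (This identifies the large-delay limit exp(a) of the distortion upper bound of Theorem 2, with a = 1 - e^{1/ρ} + γe^{1/ρ} - e^{1/ρ} ln ρ.) -/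
/-!
Write `f(λ)` for the base of the power and `a` for its derivative at `0`. Since `f(0) = 1`, we have
`log f(λ) / λ → a`, so `f(λ)^{1/λ} → exp a`. The Euler–Mascheroni constant enters `a` because the
derivative of `Γ` at `1` is `-γ`.
-/

open Real Filter Set

open scoped Topology

theorem tendsto_div_rpow_one_div_of_hasDerivAt {f : ℝ → ℝ} {f' x : ℝ} (hf : HasDerivAt f f' x)
    (hx : f x ≠ 0) :
    Tendsto (fun t : ℝ => (f (x + t) / f x) ^ (1 / t)) (𝓝[≠] 0) (𝓝 (exp (f' / f x))) := by
  have ratio_self : f x / f x = 1 := div_self hx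
  have hratio : HasDerivAt (fun y => f y / f x) (f' / f x) x := hf.div_const (f x)
  have hlog : HasDerivAt (fun y => log (f y / f x)) (f' / f x) x := by
    simpa only [ratio_self, div_one] using hratio.log (ratio_self ▸ one_ne_zero)
  have hslope : Tendsto (fun t => t⁻¹ * log (f (x + t) / f x)) (𝓝[≠] 0) (𝓝 (f' / f x)) := by
    simpa only [ratio_self, log_one, sub_zero, smul_eq_mul] using hlog.tendsto_slope_zero
  have hshift : Tendsto (fun t => x + t) (𝓝[≠] 0) (𝓝 x) :=
    ((continuous_const_add x).tendsto' 0 x (add_zero x)).mono_left nhdsWithin_le_nhds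
  have hpos : ∀ᶠ t in 𝓝[≠] 0, 0 < f (x + t) / f x :=
    hshift.eventually
      (hratio.continuousAt.eventually_const_lt (by simp only [ratio_self, one_pos]))
  refine ((continuous_exp.tendsto _).comp hslope).congr' ?_
  filter_upwards [hpos] with t ht
  rw [Function.comp_apply, rpow_def_of_pos ht, one_div, mul_comm]

theorem hasDerivAt_Gamma_one_sub_mul_rpow_neg_zero {ρ : ℝ} (hρ : 0 < ρ) :
    HasDerivAt (fun l : ℝ => Gamma (1 - l) * ρ ^ (-l)) (eulerMascheroniConstant - log ρ) 0 := by
  have hGamma : HasDerivAt (fun l : ℝ => Gamma (1 - l)) eulerMascheroniConstant 0 := by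
    have hGamma_one : HasDerivAt Gamma (-eulerMascheroniConstant) (1 - 0) := by
      simpa only [sub_zero] using hasDerivAt_Gamma_one
    simpa only [neg_neg] using hGamma_one.comp_const_sub 1 0
  have hrpow : HasDerivAt (fun l : ℝ => ρ ^ (-l)) (-log ρ) 0 := by
    simpa using (hasDerivAt_neg (0 : ℝ)).const_rpow hρ
  simpa [← sub_eq_add_neg] using hGamma.fun_mul hrpow

theorem hasDerivAt_const_div_sub {𝕜 : Type*} [NontriviallyNormedField 𝕜] (a : 𝕜) {b x : 𝕜}
    (hx : x ≠ b) : HasDerivAt (fun y => a / (y - b)) (-a / (x - b) ^ 2) x := by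
  simpa using (hasDerivAt_const x a).fun_div ((hasDerivAt_id' x).sub_const b) (sub_ne_zero.mpr hx)

theorem distortion_upper_bound_limit_general {ρ : ℝ} (hρ : 0 < ρ) (c : ℝ) :
    Tendsto (fun l : ℝ => ((c - 1) / (l - 1) + Gamma (1 - l) * ρ ^ (-l) * c) ^ (1 / l))
      (𝓝[≠] 0) (𝓝 (exp (1 - c * (1 - eulerMascheroniConstant + log ρ)))) := by
  set f : ℝ → ℝ := fun l => (c - 1) / (l - 1) + Gamma (1 - l) * ρ ^ (-l) * c with hf
  have f_zero : f 0 = 1 := by simp [hf, div_neg]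
  have hderiv : HasDerivAt f (1 - c * (1 - eulerMascheroniConstant + log ρ)) 0 :=
    ((hasDerivAt_const_div_sub (c - 1) zero_ne_one).add
      ((hasDerivAt_Gamma_one_sub_mul_rpow_neg_zero hρ).mul_const c)).congr_deriv (by ring)
  simpa only [f_zero, zero_add, div_one] using
    tendsto_div_rpow_one_div_of_hasDerivAt hderiv (f_zero ▸ one_ne_zero)

/-- Fix `ρ > 0` and let `f(λ) = (e^{1/ρ}-1)/(λ-1) + Γ(1-λ) ρ^{-λ} e^{1/ρ}`.
Then as `λ → 0⁺`, `f(λ)^{1/λ}` converges to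
`exp(1 - e^{1/ρ}(1 - γ + ln ρ))`, where `γ` is the Euler–Mascheroni constant. -/
theorem distortion_upper_bound_limit (ρ : ℝ) (hρ : 0 < ρ) :
    Tendsto
      (fun l : ℝ =>
        ((Real.exp (1 / ρ) - 1) / (l - 1) +
            Real.Gamma (1 - l) * ρ ^ (-l) * Real.exp (1 / ρ)) ^ (1 / l))
      (nhdsWithin 0 (Ioi 0))
      (nhds (Real.exp (1 - Real.exp (1 / ρ) *
        (1 - Real.eulerMascheroniConstant + Real.log ρ)))) :=
  (distortion_upper_bound_limit_general hρ (exp (1 / ρ))).mono_left (nhdsGT_le_nhdsNE 0)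
end

section
/- Let m ≥ 1 be an integer, ρ > 0, and let λ > 0 be a real number that is not an integer. Then (1/(m-1)!) ∫₀^∞ (1+ρx)^{-λ} x^{m-1} e^{-x} dx = (Γ(λ-m)/Γ(λ)) ρ^{-m} Σ_{k=0}^∞ (m)_k/((m-λ+1)_k k!) ρ^{-k} + (Γ(m-λ)/Γ(m)) ρ^{-λ} Σ_{k=0}^∞ (λ)_k/((λ-m+1)_k k!) ρ^{-k}, where both series converge; i.e., the SIMO distortion–delay bound equals Γ(λ-m)/Γ(λ)·ρ^{-m}·₁F₁(m; m-λ+1; 1/ρ) + Γ(m-λ)/Γ(m)·ρ^{-λ}·₁F₁(λ; λ-m+1; 1/ρ). -/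
open MeasureTheory Real Set

/-!
With `z = 1/ρ`, `a = m` and `b = m - λ + 1`, the substitution `t = ρx` turns the left side into
`ρ⁻ᵃ · Γ(a)⁻¹ ∫₀^∞ (1 + t)^(b-a-1) t^(a-1) e^(-zt) dt`, the Laplace integral of Tricomi's function
`U(a, b, z)`, and the right side is `ρ⁻ᵃ` times the expression of `U` by two `₁F₁` series. The
integral and the `₁F₁` expression both satisfy `U(a, b+1) = U(a, b) + a U(a+1, b+1)`: for the
integral because `1 + t` splits into two summands, for the series because of contiguous relations
of `₁F₁`. This reduces the claim to `a = 1`, where the integral is `e^z z^(1-b) Γ(b-1, z)`. There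
the claim is the expansion of the lower incomplete Gamma function obtained by iterating
`γ(s, z) = (γ(s+1, z) + e^(-z) z^s) / s`, continued to negative non-integers `s` by the recurrence
of `Γ(s, z)`.
-/

open Filter Topology
open scoped Nat

section NonInteger

variable {R : Type*} [CommRing R] {b : R}

lemma ne_neg_natCast_of_ne_intCast (hb : ∀ n : ℤ, b ≠ n) (n : ℕ) : b ≠ -n := by
  simpa using hb (-n)

lemma sub_intCast_ne_intCast (hb : ∀ n : ℤ, b ≠ n) (k n : ℤ) : b - k ≠ n :=
  fun h ↦ hb (n + k) (by push_cast; linear_combination h)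

lemma intCast_sub_ne_intCast (hb : ∀ n : ℤ, b ≠ n) (k n : ℤ) : k - b ≠ n :=
  fun h ↦ hb (k - n) (by push_cast; linear_combination -h)

lemma add_one_ne_neg_natCast (hb : ∀ n : ℕ, b ≠ -n) (n : ℕ) : b + 1 ≠ -n :=
  fun h ↦ hb (n + 1) (by push_cast; linear_combination h)

end NonInteger

section Pochhammer

lemma ascPochhammer_eval_eq_prod_range {R : Type*} [CommSemiring R] (n : ℕ) (r : R) :
    (ascPochhammer R n).eval r = ∏ j ∈ Finset.range n, (r + j) := by
  induction n with
  | zero => simp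
  | succ n ih => rw [ascPochhammer_succ_eval, ih, Finset.prod_range_succ]

lemma ascPochhammer_succ_eval_left {R : Type*} [CommSemiring R] (n : ℕ) (r : R) :
    (ascPochhammer R (n + 1)).eval r = r * (ascPochhammer R n).eval (r + 1) := by
  simp [ascPochhammer_succ_left]

lemma ascPochhammer_eval_ne_zero {R : Type*} [CommRing R] [IsDomain R] {b : R}
    (hb : ∀ n : ℕ, b ≠ -n) (k : ℕ) : (ascPochhammer R k).eval b ≠ 0 := by
  rw [Ne, ascPochhammer_eval_eq_zero_iff]
  rintro ⟨n, -, hn⟩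
  exact hb n (by rw [hn, neg_neg])

end Pochhammer

section KummerTerm

variable {𝕜 : Type*} [Field 𝕜]

/-- The `k`-th term of the confluent hypergeometric series `₁F₁(a; b; z)`. -/
noncomputable def kummerTerm (a b z : 𝕜) (k : ℕ) : 𝕜 :=
  (ascPochhammer 𝕜 k).eval a / ((ascPochhammer 𝕜 k).eval b * k !) * z ^ k

@[simp]
lemma kummerTerm_zero (a b z : 𝕜) : kummerTerm a b z 0 = 1 := by simp [kummerTerm]

lemma kummerTerm_one_left [CharZero 𝕜] (b z : 𝕜) (k : ℕ) :
    kummerTerm 1 b z k = z ^ k / (ascPochhammer 𝕜 k).eval b := by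
  have : (k ! : 𝕜) ≠ 0 := mod_cast k.factorial_ne_zero
  rw [kummerTerm, ascPochhammer_eval_one]
  field_simp

lemma kummerTerm_succ (a b z : 𝕜) (k : ℕ) :
    kummerTerm a b z (k + 1) = (a + k) * z / ((b + k) * (k + 1)) * kummerTerm a b z k := by
  simp only [kummerTerm, ascPochhammer_succ_eval, Nat.factorial_succ, Nat.cast_mul, Nat.cast_succ,
    div_eq_mul_inv, mul_inv]
  ring

lemma kummerTerm_succ_eq_shift (a b z : 𝕜) (k : ℕ) :
    kummerTerm a b z (k + 1) = a * z / (b * (k + 1)) * kummerTerm (a + 1) (b + 1) z k := by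
  simp only [kummerTerm, ascPochhammer_succ_eval_left, Nat.factorial_succ, Nat.cast_mul,
    Nat.cast_succ, div_eq_mul_inv, mul_inv]
  ring

lemma mul_kummerTerm_add_one_left (a b z : 𝕜) (k : ℕ) :
    a * kummerTerm (a + 1) b z k = (a + k) * kummerTerm a b z k := by
  have h := (ascPochhammer_succ_eval_left k a).symm.trans (ascPochhammer_succ_eval k a)
  simp only [kummerTerm]
  linear_combination z ^ k / ((ascPochhammer 𝕜 k).eval b * k !) * h

lemma mul_kummerTerm_eq_mul_add_one_right [CharZero 𝕜] {b : 𝕜} (hb : ∀ n : ℕ, b ≠ -n)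
    (a z : 𝕜) (k : ℕ) : b * kummerTerm a b z k = (b + k) * kummerTerm a (b + 1) z k := by
  have hB := ascPochhammer_eval_ne_zero hb k
  have hB' := ascPochhammer_eval_ne_zero (add_one_ne_neg_natCast hb) k
  have h := (ascPochhammer_succ_eval_left k b).symm.trans (ascPochhammer_succ_eval k b)
  have : (k ! : 𝕜) ≠ 0 := mod_cast k.factorial_ne_zero
  simp only [kummerTerm]
  field_simp
  linear_combination (ascPochhammer 𝕜 k).eval a * z ^ k * h

end KummerTerm

section KummerM

variable {𝕜 : Type*} [RCLike 𝕜]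

/-- The confluent hypergeometric function `₁F₁(a; b; z)`, also written `M(a, b, z)`. When `b` is a
non-positive integer, the terms with a vanishing denominator count as `0`. -/
noncomputable def kummerM (a b z : 𝕜) : 𝕜 := ∑' k, kummerTerm a b z k

lemma tendsto_inv_add_natCast (b : 𝕜) : Tendsto (fun k : ℕ ↦ (b + k)⁻¹) atTop (𝓝 0) :=
  tendsto_inv₀_cobounded.comp
    ((tendsto_const_add_cobounded b).comp tendsto_natCast_atTop_cobounded)

lemma tendsto_kummerTerm_ratio (a b z : 𝕜) :
    Tendsto (fun k : ℕ ↦ (a + k) * z / ((b + k) * (k + 1))) atTop (𝓝 0) := by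
  have h : Tendsto (fun k : ℕ ↦ z * (b + k)⁻¹ * (1 + (a - 1) * ((1 : 𝕜) + k)⁻¹)) atTop
      (𝓝 (z * 0 * (1 + (a - 1) * 0))) :=
    ((tendsto_inv_add_natCast b).const_mul z).mul
      (((tendsto_inv_add_natCast 1).const_mul (a - 1)).const_add 1)
  rw [mul_zero, zero_mul] at h
  refine h.congr fun k ↦ ?_
  have : (1 : 𝕜) + k ≠ 0 := by rw [add_comm]; exact Nat.cast_add_one_ne_zero k
  rw [div_eq_mul_inv, mul_inv, add_comm (k : 𝕜) 1]
  field_simp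
  ring

lemma summable_kummerTerm (a b z : 𝕜) : Summable (kummerTerm a b z) := by
  refine summable_of_ratio_norm_eventually_le (r := 1 / 2) (by norm_num) ?_
  filter_upwards [(tendsto_kummerTerm_ratio a b z).norm.eventually_le_const
    (u := 1 / 2) (by norm_num)] with k hk
  rw [kummerTerm_succ, norm_mul]
  gcongr

lemma kummerM_eq_one_add (a b z : 𝕜) :
    kummerM a b z = 1 + ∑' k, kummerTerm a b z (k + 1) := by
  rw [kummerM, (summable_kummerTerm a b z).tsum_eq_zero_add, kummerTerm_zero]

lemma kummerM_zero_left (b z : 𝕜) : kummerM 0 b z = 1 := by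
  simp [kummerM_eq_one_add, kummerTerm_succ_eq_shift]

lemma kummerM_self {a : 𝕜} (ha : ∀ n : ℕ, a ≠ -n) (z : 𝕜) :
    kummerM a a z = NormedSpace.exp z := by
  rw [NormedSpace.exp_eq_tsum_div]
  refine tsum_congr fun k ↦ ?_
  have := ascPochhammer_eval_ne_zero ha k
  rw [kummerTerm]
  field_simp

lemma sub_mul_kummerM_add_one_right {b : 𝕜} (hb : ∀ n : ℕ, b ≠ -n) (a z : 𝕜) :
    (a - b) * kummerM a (b + 1) z = a * kummerM (a + 1) (b + 1) z - b * kummerM a b z := by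
  simp only [kummerM, ← tsum_mul_left]
  rw [← ((summable_kummerTerm _ _ _).mul_left a).tsum_sub ((summable_kummerTerm _ _ _).mul_left b)]
  refine tsum_congr fun k ↦ ?_
  rw [mul_kummerTerm_add_one_left, mul_kummerTerm_eq_mul_add_one_right hb]
  ring

lemma mul_kummerM_add_one_left {b : 𝕜} (hb : b ≠ 0) (a z : 𝕜) :
    b * kummerM (a + 1) b z = b * kummerM a b z + z * kummerM (a + 1) (b + 1) z := by
  have hs (a : 𝕜) : Summable fun k ↦ b * kummerTerm a b z (k + 1) :=
    ((summable_nat_add_iff 1).2 (summable_kummerTerm a b z)).mul_left b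
  rw [kummerM_eq_one_add, kummerM_eq_one_add a, mul_add, mul_add, add_assoc, kummerM]
  simp only [← tsum_mul_left]
  rw [← (hs a).tsum_add ((summable_kummerTerm _ _ _).mul_left z)]
  congr 1
  refine tsum_congr fun k ↦ ?_
  have hk : (k : 𝕜) + 1 ≠ 0 := Nat.cast_add_one_ne_zero k
  have h := mul_kummerTerm_add_one_left (a + 1) (b + 1) z k
  rw [kummerTerm_succ_eq_shift, kummerTerm_succ_eq_shift a]
  field_simp
  linear_combination z * h

lemma kummerM_one_left {b : 𝕜} (hb : b ≠ 0) (z : 𝕜) :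
    kummerM 1 b z = 1 + z / b * kummerM 1 (b + 1) z := by
  have h := mul_kummerM_add_one_left hb 0 z
  rw [zero_add, kummerM_zero_left] at h
  field_simp
  linear_combination h

end KummerM

section IncompleteGamma

/-- The upper incomplete Gamma function `Γ(s, z)`, for real `s` and `z > 0`. -/
noncomputable def upperGamma (s z : ℝ) : ℝ := ∫ u in Ioi z, exp (-u) * u ^ (s - 1)

/-- The lower incomplete Gamma function `γ(s, z)`, for `s > 0` and `z > 0`. -/
noncomputable def lowerGamma (s z : ℝ) : ℝ := ∫ u in Ioc 0 z, exp (-u) * u ^ (s - 1)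

variable {s z : ℝ}

lemma integrableOn_Ioi_Gamma_integrand (s : ℝ) (hz : 0 < z) :
    IntegrableOn (fun u : ℝ ↦ exp (-u) * u ^ (s - 1)) (Ioi z) := by
  refine integrable_of_isBigO_exp_neg one_half_pos ?_ (Gamma_integrand_isLittleO (s - 1)).isBigO
  refine ContinuousOn.mul (by fun_prop) (continuousOn_id.rpow_const fun u hu ↦ .inl ?_)
  exact (hz.trans_le hu).ne'

lemma integrableOn_Ioc_Gamma_integrand (hs : 0 < s) (z : ℝ) :
    IntegrableOn (fun u : ℝ ↦ exp (-u) * u ^ (s - 1)) (Ioc 0 z) :=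
  (GammaIntegral_convergent hs).mono_set Ioc_subset_Ioi_self

lemma Gamma_eq_lowerGamma_add_upperGamma (hs : 0 < s) (hz : 0 < z) :
    Gamma s = lowerGamma s z + upperGamma s z := by
  rw [Gamma_eq_integral hs, lowerGamma, upperGamma,
    ← setIntegral_union Ioc_disjoint_Ioi_same measurableSet_Ioi
      (integrableOn_Ioc_Gamma_integrand hs z) (integrableOn_Ioi_Gamma_integrand s hz),
    Ioc_union_Ioi_eq_Ioi hz.le]

lemma upperGamma_add_one (s : ℝ) (hz : 0 < z) :
    upperGamma (s + 1) z = s * upperGamma s z + exp (-z) * z ^ s := by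
  have hderiv (u : ℝ) (hu : u ∈ Ici z) : HasDerivAt (fun u ↦ -(exp (-u) * u ^ s))
      (exp (-u) * u ^ (s + 1 - 1) - s * (exp (-u) * u ^ (s - 1))) u := by
    have hu : u ≠ 0 := (hz.trans_le hu).ne'
    refine ((hasDerivAt_neg u).exp.mul (hasDerivAt_rpow_const (.inl hu))).neg.congr_deriv ?_
    rw [add_sub_cancel_right]
    ring
  have hlim : Tendsto (fun u : ℝ ↦ -(exp (-u) * u ^ s)) atTop (𝓝 0) := by
    simpa [mul_comm] using (tendsto_rpow_mul_exp_neg_mul_atTop_nhds_zero s 1 one_pos).neg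
  have hint := (integrableOn_Ioi_Gamma_integrand s hz).const_mul s
  have h := integral_Ioi_of_hasDerivAt_of_tendsto' hderiv
    ((integrableOn_Ioi_Gamma_integrand (s + 1) hz).sub hint) hlim
  rw [integral_sub (integrableOn_Ioi_Gamma_integrand (s + 1) hz) hint, integral_const_mul] at h
  rw [upperGamma, upperGamma]
  linear_combination h

lemma lowerGamma_add_one (hs : 0 < s) (hz : 0 < z) :
    lowerGamma (s + 1) z = s * lowerGamma s z - exp (-z) * z ^ s := by
  have h := Gamma_add_one hs.ne'
  rw [Gamma_eq_lowerGamma_add_upperGamma hs hz,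
    Gamma_eq_lowerGamma_add_upperGamma (by positivity) hz, upperGamma_add_one s hz] at h
  linear_combination h

lemma lowerGamma_nonneg (s z : ℝ) : 0 ≤ lowerGamma s z :=
  setIntegral_nonneg measurableSet_Ioc fun u hu ↦ by
    have := hu.1
    positivity

lemma lowerGamma_add_natCast_le (hs : 0 < s) (z : ℝ) (n : ℕ) :
    lowerGamma (s + n) z ≤ z ^ n * lowerGamma s z := by
  rw [lowerGamma, lowerGamma, ← integral_const_mul]
  refine setIntegral_mono_on (integrableOn_Ioc_Gamma_integrand (by positivity) z)
    ((integrableOn_Ioc_Gamma_integrand hs z).const_mul _) measurableSet_Ioc fun u ⟨hu, huz⟩ ↦ ?_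
  calc exp (-u) * u ^ (s + n - 1)
      = u ^ n * (exp (-u) * u ^ (s - 1)) := by
        rw [add_sub_right_comm, rpow_add_natCast hu.ne']
        ring
    _ ≤ z ^ n * (exp (-u) * u ^ (s - 1)) := by gcongr

lemma lowerGamma_eq_sum_add (hs : 0 < s) (hz : 0 < z) (n : ℕ) :
    lowerGamma s z = exp (-z) * z ^ s / s * ∑ k ∈ Finset.range n, kummerTerm 1 (s + 1) z k +
      lowerGamma (s + n) z / (ascPochhammer ℝ n).eval s := by
  induction n with
  | zero => simp
  | succ n ih =>
    have hP : 0 < (ascPochhammer ℝ n).eval s := ascPochhammer_pos n s hs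
    have hP' : s * (ascPochhammer ℝ n).eval (s + 1) = (ascPochhammer ℝ n).eval s * (s + n) := by
      rw [← ascPochhammer_succ_eval_left, ascPochhammer_succ_eval]
    have hk : exp (-z) * z ^ s / s * kummerTerm 1 (s + 1) z n =
        exp (-z) * z ^ (s + n) / ((ascPochhammer ℝ n).eval s * (s + n)) := by
      rw [kummerTerm_one_left, div_mul_div_comm, hP', rpow_add_natCast hz.ne', mul_assoc]
    rw [Finset.sum_range_succ, mul_add, hk, ascPochhammer_succ_eval, Nat.cast_succ, ← add_assoc,
      lowerGamma_add_one (by positivity) hz, ih]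
    field_simp
    ring

lemma tendsto_lowerGamma_div_ascPochhammer (hs : 0 < s) (z : ℝ) :
    Tendsto (fun n : ℕ ↦ lowerGamma (s + n) z / (ascPochhammer ℝ n).eval s) atTop (𝓝 0) := by
  have hlim := (summable_kummerTerm 1 s z).tendsto_atTop_zero.mul_const (lowerGamma s z)
  rw [zero_mul] at hlim
  refine squeeze_zero (fun n ↦ ?_) (fun n ↦ ?_) hlim
  · exact div_nonneg (lowerGamma_nonneg _ z) (ascPochhammer_pos n s hs).le
  · rw [kummerTerm_one_left, div_mul_eq_mul_div]
    have := ascPochhammer_pos n s hs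
    gcongr
    exact lowerGamma_add_natCast_le hs z n

lemma lowerGamma_eq_kummerM (hs : 0 < s) (hz : 0 < z) :
    lowerGamma s z = exp (-z) * z ^ s / s * kummerM 1 (s + 1) z := by
  have h := ((summable_kummerTerm 1 (s + 1) z).hasSum.tendsto_sum_nat.const_mul
    (exp (-z) * z ^ s / s)).add (tendsto_lowerGamma_div_ascPochhammer hs z)
  simp only [← lowerGamma_eq_sum_add hs hz, add_zero] at h
  exact tendsto_nhds_unique tendsto_const_nhds h

lemma upperGamma_eq_Gamma_sub (hs : ∀ n : ℕ, s ≠ -n) (hz : 0 < z) :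
    upperGamma s z = Gamma s - exp (-z) * z ^ s / s * kummerM 1 (s + 1) z := by
  obtain ⟨n, hn⟩ := exists_nat_gt (-s)
  induction n generalizing s with
  | zero =>
    have hs : 0 < s := by simpa using hn
    rw [Gamma_eq_lowerGamma_add_upperGamma hs hz, lowerGamma_eq_kummerM hs hz]
    ring
  | succ n ih =>
    have hs₀ : s ≠ 0 := by simpa using hs 0
    have hs₁ : s + 1 ≠ 0 := by simpa using add_one_ne_neg_natCast hs 0
    have h := ih (add_one_ne_neg_natCast hs) (by push_cast at hn; linarith)
    rw [upperGamma_add_one s hz, Gamma_add_one hs₀, rpow_add_one hz.ne'] at h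
    rw [kummerM_one_left hs₁]
    field_simp at h ⊢
    linear_combination h

end IncompleteGamma

section Tricomi

/-- Tricomi's confluent hypergeometric function `U(a, b, z)`, through its connection formula with
`₁F₁`, which defines it for `b` not an integer. Where `Γ` has a pole, `1 / Γ` is `0` as it should
be, since Mathlib's `Gamma` takes the value `0` there. -/
noncomputable def tricomiU (a b z : ℝ) : ℝ :=
  Gamma (1 - b) / Gamma (a - b + 1) * kummerM a b z +
    Gamma (b - 1) / Gamma a * z ^ (1 - b) * kummerM (a - b + 1) (2 - b) z

/-- The Laplace integral representing `U(a, b, z)` for `a > 0` and `z > 0`. -/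
noncomputable def tricomiIntegral (a b z : ℝ) : ℝ :=
  (Gamma a)⁻¹ * ∫ t in Ioi 0, (1 + t) ^ (b - a - 1) * t ^ (a - 1) * exp (-(z * t))

variable {a b z : ℝ}

lemma inv_Gamma_eq_mul_inv_Gamma_add_one (s : ℝ) : (Gamma s)⁻¹ = s * (Gamma (s + 1))⁻¹ := by
  rcases eq_or_ne s 0 with rfl | hs
  · simp
  · rw [Gamma_add_one hs, mul_inv, mul_inv_cancel_left₀ hs]

lemma tricomiU_add_one_right (hb : ∀ n : ℤ, b ≠ n) (a : ℝ) (hz : 0 < z) :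
    tricomiU a (b + 1) z = tricomiU a b z + a * tricomiU (a + 1) (b + 1) z := by
  have hb₀ : b ≠ 0 := mod_cast hb 0
  have hb₁ : b - 1 ≠ 0 := sub_ne_zero.2 (mod_cast hb 1)
  have hb₂ : 1 - b ≠ 0 := sub_ne_zero.2 (Ne.symm (mod_cast hb 1))
  have hM₁ := sub_mul_kummerM_add_one_right (ne_neg_natCast_of_ne_intCast hb) a z
  have hM₂ := mul_kummerM_add_one_left hb₂ (a - b) z
  have hΓ₁ : Gamma (1 - b) = -b * Gamma (-b) := by
    rw [← Gamma_add_one (neg_ne_zero.2 hb₀), neg_add_eq_sub]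
  have hΓ₂ : Gamma b = (b - 1) * Gamma (b - 1) := by
    rw [← Gamma_add_one hb₁, sub_add_cancel]
  have hΓ₃ := inv_Gamma_eq_mul_inv_Gamma_add_one a
  have hΓ₄ := inv_Gamma_eq_mul_inv_Gamma_add_one (a - b)
  have hz' : z ^ (1 - b) = z ^ (-b) * z := by
    rw [← rpow_add_one hz.ne', neg_add_eq_sub]
  simp only [tricomiU, div_eq_mul_inv]
  rw [show 1 - (b + 1) = -b by ring, show a - (b + 1) + 1 = a - b by ring,
    show b + 1 - 1 = b by ring, show 2 - (b + 1) = 1 - b by ring,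
    show a + 1 - (b + 1) + 1 = a - b + 1 by ring, hΓ₁, hΓ₂, hΓ₃, hΓ₄, hz']
  rw [show 1 - b + 1 = 2 - b by ring] at hM₂
  linear_combination Gamma (-b) * (Gamma (a - b + 1))⁻¹ * hM₁ +
    a * Gamma (b - 1) * (Gamma (a + 1))⁻¹ * z ^ (-b) * hM₂

lemma integrableOn_one_add_pow_mul_rpow_mul_exp (N : ℕ) (ha : 0 < a) (hz : 0 < z) :
    IntegrableOn (fun t : ℝ ↦ (1 + t) ^ N * t ^ (a - 1) * exp (-(z * t))) (Ioi 0) := by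
  induction N generalizing a with
  | zero =>
    simpa using integrableOn_rpow_mul_exp_neg_mul_rpow (s := a - 1) (by linarith) one_pos hz
  | succ N ih =>
    refine ((ih ha).add (ih (a := a + 1) (by positivity))).congr_fun (fun t ht ↦ ?_)
      measurableSet_Ioi
    have hpow : t ^ a = t ^ (a - 1) * t := by
      rw [← rpow_add_one (ne_of_gt ht), sub_add_cancel]
    simp only [Pi.add_apply, add_sub_cancel_right, hpow]
    ring

lemma integrableOn_one_add_rpow_mul_rpow_mul_exp (c : ℝ) (ha : 0 < a) (hz : 0 < z) :
    IntegrableOn (fun t : ℝ ↦ (1 + t) ^ c * t ^ (a - 1) * exp (-(z * t))) (Ioi 0) := by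
  obtain ⟨N, hN⟩ := exists_nat_ge c
  refine (integrableOn_one_add_pow_mul_rpow_mul_exp N ha hz).mono'
    (by fun_prop) ((ae_restrict_mem measurableSet_Ioi).mono fun t (ht : 0 < t) ↦ ?_)
  rw [norm_of_nonneg (by positivity), ← rpow_natCast]
  gcongr
  linarith

lemma tricomiIntegral_add_one_right (b : ℝ) (ha : 0 < a) (hz : 0 < z) :
    tricomiIntegral a (b + 1) z =
      tricomiIntegral a b z + a * tricomiIntegral (a + 1) (b + 1) z := by
  have hsplit : ∀ t ∈ Ioi (0 : ℝ),
      (1 + t) ^ (b + 1 - a - 1) * t ^ (a - 1) * exp (-(z * t)) =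
        (1 + t) ^ (b - a - 1) * t ^ (a - 1) * exp (-(z * t)) +
          (1 + t) ^ (b + 1 - (a + 1) - 1) * t ^ (a + 1 - 1) * exp (-(z * t)) := by
    intro t (ht : 0 < t)
    rw [show b + 1 - a - 1 = b - a - 1 + 1 by ring, show b + 1 - (a + 1) - 1 = b - a - 1 by ring,
      show a + 1 - 1 = a - 1 + 1 by ring, rpow_add_one (by positivity), rpow_add_one ht.ne']
    ring
  simp only [tricomiIntegral]
  rw [setIntegral_congr_fun measurableSet_Ioi hsplit,
    integral_add (integrableOn_one_add_rpow_mul_rpow_mul_exp _ ha hz)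
      (integrableOn_one_add_rpow_mul_rpow_mul_exp _ (by positivity) hz),
    inv_Gamma_eq_mul_inv_Gamma_add_one a]
  ring

lemma integral_comp_add_left_Ioi {E : Type*} [NormedAddCommGroup E] [NormedSpace ℝ E]
    (f : ℝ → E) (c x : ℝ) : ∫ t in Ioi x, f (c + t) = ∫ u in Ioi (c + x), f u := by
  have h := (measurePreserving_add_left volume c).setIntegral_preimage_emb
    (measurableEmbedding_addLeft c) f (Ioi (c + x))
  simpa using h

lemma tricomiIntegral_one_left (b : ℝ) (hz : 0 < z) :
    tricomiIntegral 1 b z = exp z * z ^ (1 - b) * upperGamma (b - 1) z := by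
  have hsubst : ∫ t in Ioi (0 : ℝ), exp (-(z * (1 + t))) * (z * (1 + t)) ^ (b - 1 - 1) =
      z⁻¹ * upperGamma (b - 1) z := by
    rw [integral_comp_add_left_Ioi (fun v ↦ exp (-(z * v)) * (z * v) ^ (b - 1 - 1)),
      integral_comp_mul_left_Ioi (fun u ↦ exp (-u) * u ^ (b - 1 - 1)) _ hz]
    simp [upperGamma]
  have hz' : z ^ (1 - b) = (z ^ (b - 1 - 1))⁻¹ * z⁻¹ := by
    rw [← rpow_neg hz.le, ← div_eq_mul_inv, ← rpow_sub_one hz.ne']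
    ring_nf
  rw [hz', mul_assoc, mul_assoc, ← hsubst, ← mul_assoc, tricomiIntegral, Gamma_one, inv_one,
    one_mul, ← integral_const_mul]
  refine setIntegral_congr_fun measurableSet_Ioi fun t ht ↦ ?_
  have ht : 0 < t := ht
  rw [mul_rpow hz.le (by positivity), mul_one_add, neg_add, exp_add, exp_neg z, sub_self, rpow_zero]
  have : z ^ (b - 1 - 1) ≠ 0 := by positivity
  field_simp

lemma tricomiU_one_left (hb : ∀ n : ℤ, b ≠ n) (hz : 0 < z) :
    tricomiU 1 b z = exp z * z ^ (1 - b) * upperGamma (b - 1) z := by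
  have hs : ∀ n : ℕ, b - 1 ≠ -n :=
    ne_neg_natCast_of_ne_intCast (mod_cast sub_intCast_ne_intCast hb 1)
  have hb₁ : ∀ n : ℕ, 1 - b ≠ -n :=
    ne_neg_natCast_of_ne_intCast (mod_cast intCast_sub_ne_intCast hb 1)
  have hb₂ : ∀ n : ℕ, 2 - b ≠ -n :=
    ne_neg_natCast_of_ne_intCast (mod_cast intCast_sub_ne_intCast hb 2)
  have hb₁' : 1 - b ≠ 0 := by simpa using hb₁ 0
  have hΓ : Gamma (1 - b) / Gamma (2 - b) = -(b - 1)⁻¹ := by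
    rw [show 2 - b = 1 - b + 1 by ring, Gamma_add_one hb₁',
      div_mul_cancel_right₀ (Gamma_ne_zero hb₁), ← inv_neg, neg_sub]
  have hpow : z ^ (1 - b) * z ^ (b - 1) = 1 := by
    rw [← rpow_add hz, show 1 - b + (b - 1) = 0 by ring, rpow_zero]
  have hexp : exp z * exp (-z) = 1 := by rw [← exp_add, add_neg_cancel, exp_zero]
  rw [upperGamma_eq_Gamma_sub hs hz, tricomiU, show 1 - b + 1 = 2 - b by ring, kummerM_self hb₂,
    ← exp_eq_exp_ℝ, hΓ, sub_add_cancel, Gamma_one, div_one]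
  linear_combination kummerM 1 b z * (b - 1)⁻¹ * (exp z * exp (-z) * hpow + hexp)

lemma tricomiIntegral_eq_tricomiU (hb : ∀ n : ℤ, b ≠ n) {m : ℕ} (hm : 1 ≤ m) (hz : 0 < z) :
    tricomiIntegral m b z = tricomiU m b z := by
  induction m, hm using Nat.le_induction generalizing b with
  | base => rw [Nat.cast_one, tricomiIntegral_one_left b hz, tricomiU_one_left hb hz]
  | succ m hm ih =>
    have hb' : ∀ k : ℤ, b - 1 ≠ k := mod_cast sub_intCast_ne_intCast hb 1
    have hm₀ : 0 < (m : ℝ) := Nat.cast_pos.2 hm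
    have hI := tricomiIntegral_add_one_right (b - 1) hm₀ hz
    have hU := tricomiU_add_one_right hb' m hz
    rw [sub_add_cancel] at hI hU
    rw [ih hb, ih hb', hU] at hI
    rw [Nat.cast_succ]
    exact (mul_left_cancel₀ hm₀.ne' (add_left_cancel hI)).symm

lemma inv_Gamma_mul_integral_one_add_mul (a l : ℝ) {ρ : ℝ} (hρ : 0 < ρ) :
    (Gamma a)⁻¹ * ∫ x in Ioi (0 : ℝ), (1 + ρ * x) ^ (-l) * x ^ (a - 1) * exp (-x) =
      ρ ^ (-a) * tricomiIntegral a (a - l + 1) ρ⁻¹ := by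
  have hsubst := integral_comp_mul_left_Ioi'
    (fun t : ℝ ↦ (1 + t) ^ (-l) * t ^ (a - 1) * exp (-(ρ⁻¹ * t))) 0 hρ
  rw [mul_zero] at hsubst
  rw [tricomiIntegral, show a - l + 1 - a - 1 = -l by ring, ← hsubst, smul_eq_mul,
    mul_left_comm (ρ ^ (-a)), ← mul_assoc (ρ ^ (-a))]
  congr 1
  rw [← integral_const_mul]
  refine setIntegral_congr_fun measurableSet_Ioi fun x hx ↦ ?_
  have hx : 0 < x := hx
  have hpow : ρ ^ (-a) * ρ * ρ ^ (a - 1) = 1 := by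
    rw [← rpow_add_one hρ.ne', ← rpow_add hρ, show -a + 1 + (a - 1) = 0 by ring, rpow_zero]
  simp only [mul_rpow hρ.le hx.le, inv_mul_cancel_left₀ hρ.ne']
  linear_combination -(1 + ρ * x) ^ (-l) * x ^ (a - 1) * exp (-x) * hpow

lemma rpow_neg_mul_tricomiU_inv (a l : ℝ) {ρ : ℝ} (hρ : 0 < ρ) :
    ρ ^ (-a) * tricomiU a (a - l + 1) ρ⁻¹ =
      Gamma (l - a) / Gamma l * ρ ^ (-a) * kummerM a (a - l + 1) ρ⁻¹ +
        Gamma (a - l) / Gamma a * ρ ^ (-l) * kummerM l (l - a + 1) ρ⁻¹ := by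
  have hpow : ρ ^ (-a) * ρ⁻¹ ^ (l - a) = ρ ^ (-l) := by
    rw [← rpow_neg_eq_inv_rpow, ← rpow_add hρ]
    ring_nf
  rw [tricomiU, show 1 - (a - l + 1) = l - a by ring, show a - (a - l + 1) + 1 = l by ring,
    show 2 - (a - l + 1) = l - a + 1 by ring, add_sub_cancel_right]
  linear_combination Gamma (a - l) / Gamma a * kummerM l (l - a + 1) ρ⁻¹ * hpow

end Tricomi

lemma kummerTerm_inv_eq_prod (a b : ℝ) {ρ : ℝ} (hρ : 0 < ρ) (k : ℕ) :
    kummerTerm a b ρ⁻¹ k = (∏ j ∈ Finset.range k, (a + j)) /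
      ((∏ j ∈ Finset.range k, (b + j)) * k !) * ρ ^ (-(k : ℝ)) := by
  rw [kummerTerm, ascPochhammer_eval_eq_prod_range, ascPochhammer_eval_eq_prod_range, inv_pow,
    rpow_neg hρ.le, rpow_natCast]

theorem simo_distortion_delay_general (m : ℕ) (hm : 1 ≤ m) (ρ l : ℝ) (hρ : 0 < ρ)
    (hlint : ∀ n : ℤ, l ≠ n) :
    Summable (fun k : ℕ =>
      (∏ j ∈ Finset.range k, ((m:ℝ) + j)) /
        ((∏ j ∈ Finset.range k, ((m:ℝ) - l + 1 + j)) * (Nat.factorial k)) * ρ ^ (-(k:ℝ))) ∧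
    Summable (fun k : ℕ =>
      (∏ j ∈ Finset.range k, (l + j)) /
        ((∏ j ∈ Finset.range k, (l - (m:ℝ) + 1 + j)) * (Nat.factorial k)) * ρ ^ (-(k:ℝ))) ∧
    (1 / (Nat.factorial (m - 1) : ℝ)) *
        ∫ x in Ioi (0:ℝ), (1 + ρ * x) ^ (-l) * x ^ (m - 1) * Real.exp (-x) =
      (Real.Gamma (l - m) / Real.Gamma l) * ρ ^ (-(m:ℝ)) *
          ∑' k : ℕ, (∏ j ∈ Finset.range k, ((m:ℝ) + j)) /
            ((∏ j ∈ Finset.range k, ((m:ℝ) - l + 1 + j)) * (Nat.factorial k)) * ρ ^ (-(k:ℝ)) +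
        (Real.Gamma ((m:ℝ) - l) / Real.Gamma m) * ρ ^ (-l) *
          ∑' k : ℕ, (∏ j ∈ Finset.range k, (l + j)) /
            ((∏ j ∈ Finset.range k, (l - (m:ℝ) + 1 + j)) * (Nat.factorial k)) * ρ ^ (-(k:ℝ)) := by
  simp only [← kummerTerm_inv_eq_prod _ _ hρ]
  refine ⟨summable_kummerTerm _ _ _, summable_kummerTerm _ _ _, ?_⟩
  have hb : ∀ k : ℤ, (m : ℝ) - l + 1 ≠ k := fun k h ↦
    intCast_sub_ne_intCast hlint (m + 1) k (by push_cast; linear_combination h)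
  have hm' : ((m - 1 : ℕ) : ℝ) = m - 1 := by rw [Nat.cast_sub hm, Nat.cast_one]
  have hΓ : ((m - 1)! : ℝ) = Gamma m := by rw [← Gamma_nat_eq_factorial, hm', sub_add_cancel]
  simp only [← rpow_natCast, hm', hΓ, one_div]
  rw [inv_Gamma_mul_integral_one_add_mul _ l hρ,
    tricomiIntegral_eq_tricomiU hb hm (inv_pos.2 hρ), rpow_neg_mul_tricomiU_inv _ l hρ]
  rfl

/-- **SIMO distortion–delay bound (Corollary 2).** For an integer `m ≥ 1`,
`ρ > 0` and a non-integer real `λ > 0`,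
`(1/(m-1)!) ∫₀^∞ (1+ρx)^{-λ} x^{m-1} e^{-x} dx
  = Γ(λ-m)/Γ(λ) · ρ^{-m} · ₁F₁(m; m-λ+1; 1/ρ)
    + Γ(m-λ)/Γ(m) · ρ^{-λ} · ₁F₁(λ; λ-m+1; 1/ρ)`,
with both confluent hypergeometric series convergent. -/
theorem simo_distortion_delay (m : ℕ) (hm : 1 ≤ m) (ρ l : ℝ) (hρ : 0 < ρ) (hl : 0 < l)
    (hlint : ∀ n : ℤ, l ≠ n) :
    Summable (fun k : ℕ =>
      (∏ j ∈ Finset.range k, ((m:ℝ) + j)) /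
        ((∏ j ∈ Finset.range k, ((m:ℝ) - l + 1 + j)) * (Nat.factorial k)) * ρ ^ (-(k:ℝ))) ∧
    Summable (fun k : ℕ =>
      (∏ j ∈ Finset.range k, (l + j)) /
        ((∏ j ∈ Finset.range k, (l - (m:ℝ) + 1 + j)) * (Nat.factorial k)) * ρ ^ (-(k:ℝ))) ∧
    (1 / (Nat.factorial (m - 1) : ℝ)) *
        ∫ x in Ioi (0:ℝ), (1 + ρ * x) ^ (-l) * x ^ (m - 1) * Real.exp (-x) =
      (Real.Gamma (l - m) / Real.Gamma l) * ρ ^ (-(m:ℝ)) *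
          ∑' k : ℕ, (∏ j ∈ Finset.range k, ((m:ℝ) + j)) /
            ((∏ j ∈ Finset.range k, ((m:ℝ) - l + 1 + j)) * (Nat.factorial k)) * ρ ^ (-(k:ℝ)) +
        (Real.Gamma ((m:ℝ) - l) / Real.Gamma m) * ρ ^ (-l) *
          ∑' k : ℕ, (∏ j ∈ Finset.range k, (l + j)) /
            ((∏ j ∈ Finset.range k, (l - (m:ℝ) + 1 + j)) * (Nat.factorial k)) * ρ ^ (-(k:ℝ)) :=
  simo_distortion_delay_general m hm ρ l hρ hlint
end

section
/- Let M ≥ 1 be an integer, let d ≥ 0 be an integer, and let c > 0 be a real number. Then the infimum over all vectors α = (α₁,…,α_M) with α₁ ≥ α₂ ≥ ⋯ ≥ α_M ≥ 0 of Σ_{i=1}^M [(2i-1+d)α_i + c·max(1-α_i, 0)] equals Σ_{i=1}^M min(c, 2i-1+d), and the infimum is attained with each α_i ∈ {0,1}. (With c = θKη = η/τₙ, M = min(M_t,M_r), d = |M_t-M_r|, this yields the buffered distortion SNR exponent α(η) = τₙ Σ_{i=1}^{M_*} min(η/τₙ, 2i-1+|M_t-M_r|) of Theorem 4.) -/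
open Finset

/-!
The lower bound holds coordinate by coordinate: for `a ≤ 1` the summand `w * a + c * (1 - a)` is a
convex combination of `w` and `c`, and for `a ≥ 1` it is `w * a ≥ w`. The coordinatewise minimizer
`a = 1` if `w ≤ c`, `a = 0` otherwise, is nonincreasing in the weight `w`, so for nondecreasing
weights the ordering constraint costs nothing.
-/

section Threshold

variable {ι β R : Type*} [Preorder ι] [Preorder β] [DecidableLE β] [Zero R] [One R] [Preorder R]
  [ZeroLEOneClass R]

lemma antitone_ite_le {w : ι → β} (hw : Monotone w) (c : β) :
    Antitone fun i ↦ if w i ≤ c then (1 : R) else 0 := by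
  intro i j hij
  by_cases hj : w j ≤ c
  · simp only [hj, (hw hij).trans hj, if_true, le_refl]
  · simp only [hj, if_false]
    exact ite_nonneg zero_le_one le_rfl

end Threshold

section HingePenalty

variable {R : Type*} [CommRing R] [LinearOrder R] [IsOrderedRing R]

lemma min_le_mul_add_mul_max_one_sub (c : R) {w a : R} (hw : 0 ≤ w) (ha : 0 ≤ a) :
    min c w ≤ w * a + c * max (1 - a) 0 := by
  rcases le_total a 1 with ha1 | ha1
  · calc
      min c w ≤ (1 - a) • c + a • w :=
        Convex.min_le_combo c w (sub_nonneg.mpr ha1) ha (sub_add_cancel 1 a)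
      _ = w * a + c * max (1 - a) 0 := by
        rw [max_eq_left (sub_nonneg.mpr ha1), smul_eq_mul, smul_eq_mul]
        ring
  · calc
      min c w ≤ w := min_le_right c w
      _ ≤ w * a := le_mul_of_one_le_right hw ha1
      _ = w * a + c * max (1 - a) 0 := by
        rw [max_eq_right (sub_nonpos.mpr ha1), mul_zero, add_zero]

lemma mul_ite_add_mul_max_one_sub_ite (c w : R) :
    w * (if w ≤ c then 1 else 0) + c * max (1 - if w ≤ c then 1 else 0) 0 = min c w := by
  split_ifs with h
  · simp [min_eq_right h]
  · simp [min_eq_left (not_le.mp h).le]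

variable {ι : Type*} [Fintype ι] [Preorder ι]

lemma exists_antitone_zero_or_one_sum_eq_sum_min {w : ι → R} (hw : Monotone w) (c : R) :
    ∃ α : ι → R, Antitone α ∧ (∀ i, α i = 0 ∨ α i = 1) ∧
      ∑ i, (w i * α i + c * max (1 - α i) 0) = ∑ i, min c (w i) :=
  ⟨fun i ↦ if w i ≤ c then 1 else 0, antitone_ite_le hw c, fun _ ↦ (ite_eq_or_eq _ _ _).symm,
    sum_congr rfl fun i _ ↦ mul_ite_add_mul_max_one_sub_ite c (w i)⟩

theorem snr_exponent_optimization_general {w : ι → R} (hw : Monotone w) (hw₀ : ∀ i, 0 ≤ w i)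
    (c : R) :
    IsLeast
      {v : R | ∃ α : ι → R, Antitone α ∧ (∀ i, 0 ≤ α i) ∧
        v = ∑ i, (w i * α i + c * max (1 - α i) 0)}
      (∑ i, min c (w i)) ∧
    ∃ α : ι → R, Antitone α ∧ (∀ i, α i = 0 ∨ α i = 1) ∧
      ∑ i, (w i * α i + c * max (1 - α i) 0) = ∑ i, min c (w i) := by
  have attained := exists_antitone_zero_or_one_sum_eq_sum_min hw c
  refine ⟨⟨?_, ?_⟩, attained⟩
  · obtain ⟨α, hα, hα01, hsum⟩ := attained
    have hα₀ (i : ι) : 0 ≤ α i := by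
      rcases hα01 i with h | h <;> simp only [h, le_refl, zero_le_one]
    exact ⟨α, hα, hα₀, hsum.symm⟩
  · rintro _ ⟨α, -, hα₀, rfl⟩
    exact sum_le_sum fun i _ ↦ min_le_mul_add_mul_max_one_sub c (hw₀ i) (hα₀ i)

end HingePenalty

/-- **Optimization underlying the buffered distortion SNR exponent (Theorem 4).**
For integers `M ≥ 1`, `d ≥ 0` and a real `c > 0`, the infimum over all vectors
`α₁ ≥ α₂ ≥ ⋯ ≥ α_M ≥ 0` of `Σ_{i=1}^M [(2i-1+d)α_i + c·max(1-α_i,0)]` equals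
`Σ_{i=1}^M min(c, 2i-1+d)` (here indexed by `i : Fin M`, so `2i-1+d` becomes
`2i+1+d`), and the infimum is attained with each `α_i ∈ {0,1}`. -/
theorem snr_exponent_optimization (M d : ℕ) (hM : 1 ≤ M) (c : ℝ) (hc : 0 < c) :
    IsLeast
      {v : ℝ | ∃ α : Fin M → ℝ,
        (∀ i j : Fin M, i ≤ j → α j ≤ α i) ∧ (∀ i, 0 ≤ α i) ∧
        v = ∑ i : Fin M, ((2 * (i : ℝ) + 1 + d) * α i + c * max (1 - α i) 0)}
      (∑ i : Fin M, min c (2 * (i : ℝ) + 1 + d)) ∧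
    ∃ α : Fin M → ℝ,
      (∀ i j : Fin M, i ≤ j → α j ≤ α i) ∧ (∀ i, α i = 0 ∨ α i = 1) ∧
      (∑ i : Fin M, ((2 * (i : ℝ) + 1 + d) * α i + c * max (1 - α i) 0)) =
        ∑ i : Fin M, min c (2 * (i : ℝ) + 1 + d) :=
  snr_exponent_optimization_general (w := fun i : Fin M ↦ 2 * (i : ℝ) + 1 + d)
    (fun i j hij ↦ by dsimp only; gcongr; exact hij) (fun i ↦ by positivity) c
end

section
/- For every s > 0, lim_{ρ→∞} -ln(∫₀^∞ (1+ρx)^{-s} e^{-x} dx)/ln ρ = min(s, 1). Consequently, for the buffered SISO Rayleigh channel with bandwidth ratio η > 0 and normalized delay τₙ > 0 (so s = η/τₙ), the distortion SNR exponent is lim_{ρ→∞} -ln D(ρ)/ln ρ = τₙ min(η/τₙ, 1) = min(η, τₙ), where D(ρ) = (∫₀^∞ (1+ρx)^{-η/τₙ} e^{-x} dx)^{τₙ}. (This is the SISO special case of Theorem 4.) -/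
open MeasureTheory Real Filter Set

/-!
Let the channel power gain have law `μ` on `(0, ∞)`. From above, `(1 + ρ x) ^ (-s) ≤ (ρ x) ^ (-t)`
for `0 ≤ t ≤ s`, so finite negative moments of `μ` of all orders `t < m` give decay at least
`ρ ^ (-t)` for all `t < min s m`. From below, two scenarios compete: for a typical gain the
distortion is of order `ρ ^ (-s)`, while with probability `μ (0, 1/ρ]`, which is at least of order
`ρ ^ (-m)`, the channel is in outage and the distortion is of order one. For the exponential law,
`m = 1`.
-/

open ProbabilityTheory Asymptotics

open scoped Topology

/-- The SNR exponent of `f` is `d`: `f ρ` behaves like `ρ ^ (-d)`, on the logarithmic scale, as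
`ρ → ∞`. -/
def HasSNRExponent (f : ℝ → ℝ) (d : ℝ) : Prop :=
  Tendsto (fun ρ : ℝ => -Real.log (f ρ) / Real.log ρ) atTop (𝓝 d)

section SNRExponent

variable {f : ℝ → ℝ} {d t u : ℝ}

lemma isLittleO_rpow_neg_rpow_neg_atTop (h : u < t) :
    (fun ρ : ℝ => ρ ^ (-t)) =o[atTop] fun ρ : ℝ => ρ ^ (-u) := by
  refine isLittleO_of_tendsto' ?_ ((tendsto_rpow_neg_atTop (sub_pos.2 h)).congr' ?_)
  · filter_upwards [eventually_gt_atTop 0] with ρ hρ h0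
    exact absurd h0 (rpow_pos_of_pos hρ _).ne'
  · filter_upwards [eventually_gt_atTop 0] with ρ hρ
    rw [← rpow_sub hρ]
    ring_nf

lemma eventually_le_neg_log_div_log (hf : ∀ᶠ ρ in atTop, f ρ ≠ 0)
    (h : ∀ᶠ ρ in atTop, |f ρ| ≤ ρ ^ (-u)) :
    ∀ᶠ ρ in atTop, u ≤ -Real.log (f ρ) / Real.log ρ := by
  filter_upwards [hf, h, eventually_gt_atTop 1] with ρ hfρ hle hρ
  have hρ₀ : 0 < ρ := one_pos.trans hρ
  have hlog := log_le_log (abs_pos.2 hfρ) hle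
  rw [log_abs, log_rpow hρ₀] at hlog
  rw [le_div_iff₀ (log_pos hρ)]
  linarith

lemma eventually_neg_log_div_log_le (h : ∀ᶠ ρ in atTop, ρ ^ (-u) ≤ |f ρ|) :
    ∀ᶠ ρ in atTop, -Real.log (f ρ) / Real.log ρ ≤ u := by
  filter_upwards [h, eventually_gt_atTop 1] with ρ hle hρ
  have hρ₀ : 0 < ρ := one_pos.trans hρ
  have hlog := log_le_log (rpow_pos_of_pos hρ₀ _) hle
  rw [log_abs, log_rpow hρ₀] at hlog
  rw [div_le_iff₀ (log_pos hρ)]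
  linarith

lemma hasSNRExponent_of_isBigO (hlower : (fun ρ : ℝ => ρ ^ (-d)) =O[atTop] f)
    (hupper : ∀ᶠ t in 𝓝[<] d, f =O[atTop] fun ρ : ℝ => ρ ^ (-t)) : HasSNRExponent f d := by
  have hf : ∀ᶠ ρ in atTop, f ρ ≠ 0 := by
    filter_upwards [hlower.eq_zero_imp, eventually_gt_atTop 0] with ρ himp hρ h0
    exact (rpow_pos_of_pos hρ _).ne' (himp h0)
  refine tendsto_order.2 ⟨fun a ha => ?_, fun a ha => ?_⟩
  · obtain ⟨u, hau, hud⟩ := exists_between ha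
    obtain ⟨t, hft, hut, -⟩ := (hupper.and (Ioo_mem_nhdsLT hud)).exists
    have hfu : ∀ᶠ ρ in atTop, |f ρ| ≤ ρ ^ (-u) := by
      filter_upwards [(hft.trans_isLittleO (isLittleO_rpow_neg_rpow_neg_atTop hut)).eventuallyLE,
        eventually_ge_atTop 0] with ρ hle hρ
      rwa [norm_eq_abs, norm_of_nonneg (rpow_nonneg hρ _)] at hle
    exact (eventually_le_neg_log_div_log hf hfu).mono fun _ => hau.trans_le
  · obtain ⟨u, hdu, hua⟩ := exists_between ha
    have huf : ∀ᶠ ρ in atTop, ρ ^ (-u) ≤ |f ρ| :=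
      ((isLittleO_rpow_neg_rpow_neg_atTop hdu).trans_isBigO hlower).eventuallyLE.mono
        fun _ => (le_norm_self _).trans
    exact (eventually_neg_log_div_log_le huf).mono fun _ hρ => hρ.trans_lt hua

lemma HasSNRExponent.rpow_const (h : HasSNRExponent f d) (hf : ∀ᶠ ρ in atTop, 0 < f ρ) (τ : ℝ) :
    HasSNRExponent (fun ρ => f ρ ^ τ) (τ * d) := by
  refine (h.const_mul τ).congr' ?_
  filter_upwards [hf] with ρ hρ
  rw [log_rpow hρ]
  ring

end SNRExponent

/-- The mean distortion at signal-to-noise ratio `ρ` over a channel whose power gain has law `μ`,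
with bandwidth ratio `s` per unit of delay: the distortion at gain `x` is `(1 + ρ * x) ^ (-s)`. -/
noncomputable def meanDistortion (μ : Measure ℝ) (s ρ : ℝ) : ℝ :=
  ∫ x, (1 + ρ * x) ^ (-s) ∂μ

section MeanDistortion

variable {μ : Measure ℝ} {s t m ρ a : ℝ}

lemma ae_one_add_mul_rpow_nonneg (hμ : ∀ᵐ x ∂μ, 0 ≤ x) (hρ : 0 ≤ ρ) :
    0 ≤ᵐ[μ] fun x => (1 + ρ * x) ^ (-s) := by
  filter_upwards [hμ] with x hx
  exact rpow_nonneg (by positivity) _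

lemma meanDistortion_le_rpow_neg_mul_integral (hμ : ∀ᵐ x ∂μ, 0 < x) (ht : 0 ≤ t) (hts : t ≤ s)
    (hρ : 0 < ρ) (hint : Integrable (fun x : ℝ => x ^ (-t)) μ) :
    meanDistortion μ s ρ ≤ ρ ^ (-t) * ∫ x, x ^ (-t) ∂μ := by
  rw [← integral_const_mul]
  refine integral_mono_of_nonneg (ae_one_add_mul_rpow_nonneg (hμ.mono fun _ => le_of_lt) hρ.le)
    (hint.const_mul _) ?_
  filter_upwards [hμ] with x hx
  have hρx : 0 < ρ * x := mul_pos hρ hx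
  calc (1 + ρ * x) ^ (-s)
      ≤ (1 + ρ * x) ^ (-t) := rpow_le_rpow_of_exponent_le (by linarith) (neg_le_neg hts)
    _ ≤ (ρ * x) ^ (-t) := rpow_le_rpow_of_nonpos hρx (by linarith) (neg_nonpos.2 ht)
    _ = ρ ^ (-t) * x ^ (-t) := mul_rpow hρ.le hx.le

lemma meanDistortion_isBigO_rpow_neg (hμ : ∀ᵐ x ∂μ, 0 < x) (ht : 0 ≤ t) (hts : t ≤ s)
    (hint : Integrable (fun x : ℝ => x ^ (-t)) μ) :
    meanDistortion μ s =O[atTop] fun ρ : ℝ => ρ ^ (-t) := by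
  refine .of_bound (∫ x, x ^ (-t) ∂μ) ?_
  filter_upwards [eventually_gt_atTop 0] with ρ hρ
  have hnonneg : 0 ≤ meanDistortion μ s ρ :=
    integral_nonneg_of_ae (ae_one_add_mul_rpow_nonneg (hμ.mono fun _ => le_of_lt) hρ.le)
  rw [norm_of_nonneg hnonneg, norm_of_nonneg (rpow_nonneg hρ.le _), mul_comm]
  exact meanDistortion_le_rpow_neg_mul_integral hμ ht hts hρ hint

variable [IsFiniteMeasure μ]

lemma integrable_one_add_mul_rpow_neg (hμ : ∀ᵐ x ∂μ, 0 ≤ x) (hs : 0 ≤ s) (hρ : 0 ≤ ρ) :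
    Integrable (fun x => (1 + ρ * x) ^ (-s)) μ := by
  have hmeas : Measurable fun x => (1 + ρ * x) ^ (-s) := by fun_prop
  refine .of_bound hmeas.aestronglyMeasurable 1 ?_
  filter_upwards [hμ] with x hx
  have hρx : 0 ≤ ρ * x := mul_nonneg hρ hx
  rw [norm_of_nonneg (by positivity)]
  exact rpow_le_one_of_one_le_of_nonpos (by linarith) (neg_nonpos.2 hs)

lemma meanDistortion_pos [NeZero μ] (hμ : ∀ᵐ x ∂μ, 0 ≤ x) (hs : 0 ≤ s) (hρ : 0 ≤ ρ) :
    0 < meanDistortion μ s ρ := by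
  rw [meanDistortion, integral_pos_iff_support_of_nonneg_ae (ae_one_add_mul_rpow_nonneg hμ hρ)
    (integrable_one_add_mul_rpow_neg hμ hs hρ)]
  have hsupp : ∀ᵐ x ∂μ, x ∈ Function.support fun x => (1 + ρ * x) ^ (-s) := by
    filter_upwards [hμ] with x hx
    exact (rpow_pos_of_pos (by positivity) _).ne'
  exact pos_iff_ne_zero.2 (frequently_ae_mem_iff.1 hsupp.frequently)

lemma rpow_neg_mul_meanDistortion_one_le (hμ : ∀ᵐ x ∂μ, 0 ≤ x) (hs : 0 ≤ s) (hρ : 1 ≤ ρ) :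
    ρ ^ (-s) * meanDistortion μ s 1 ≤ meanDistortion μ s ρ := by
  have hρ₀ : 0 ≤ ρ := zero_le_one.trans hρ
  rw [meanDistortion, ← integral_const_mul]
  refine integral_mono_ae ((integrable_one_add_mul_rpow_neg hμ hs zero_le_one).const_mul _)
    (integrable_one_add_mul_rpow_neg hμ hs hρ₀) ?_
  filter_upwards [hμ] with x hx
  calc ρ ^ (-s) * (1 + 1 * x) ^ (-s)
      = (ρ * (1 + 1 * x)) ^ (-s) := (mul_rpow hρ₀ (by positivity)).symm
    _ ≤ (1 + ρ * x) ^ (-s) :=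
        rpow_le_rpow_of_nonpos (by positivity) (by linarith) (neg_nonpos.2 hs)

lemma rpow_neg_isBigO_meanDistortion [NeZero μ] (hμ : ∀ᵐ x ∂μ, 0 ≤ x) (hs : 0 ≤ s) :
    (fun ρ : ℝ => ρ ^ (-s)) =O[atTop] meanDistortion μ s := by
  have hpos : 0 < meanDistortion μ s 1 := meanDistortion_pos hμ hs zero_le_one
  refine .of_bound (meanDistortion μ s 1)⁻¹ ?_
  filter_upwards [eventually_ge_atTop 1] with ρ hρ
  have hρ₀ : 0 ≤ ρ := zero_le_one.trans hρ
  rw [norm_of_nonneg (rpow_nonneg hρ₀ _), norm_of_nonneg (meanDistortion_pos hμ hs hρ₀).le,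
    le_inv_mul_iff₀ hpos, mul_comm]
  exact rpow_neg_mul_meanDistortion_one_le hμ hs hρ

lemma rpow_neg_mul_measureReal_Iic_le_meanDistortion (hμ : ∀ᵐ x ∂μ, 0 ≤ x) (hs : 0 ≤ s)
    (hρ : 0 ≤ ρ) (ha : 0 ≤ a) :
    (1 + ρ * a) ^ (-s) * μ.real (Iic a) ≤ meanDistortion μ s ρ := by
  have hsub : Iic a ≤ᵐ[μ] {x | (1 + ρ * a) ^ (-s) ≤ (1 + ρ * x) ^ (-s)} := by
    filter_upwards [hμ] with x hx hxa
    exact rpow_le_rpow_of_nonpos (by positivity) (by gcongr; exact hxa) (neg_nonpos.2 hs)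
  calc (1 + ρ * a) ^ (-s) * μ.real (Iic a)
      ≤ (1 + ρ * a) ^ (-s) * μ.real {x | (1 + ρ * a) ^ (-s) ≤ (1 + ρ * x) ^ (-s)} := by
        refine mul_le_mul_of_nonneg_left ?_ (by positivity)
        exact ENNReal.toReal_mono (measure_ne_top _ _) (measure_mono_ae hsub)
    _ ≤ meanDistortion μ s ρ :=
        mul_meas_ge_le_integral_of_nonneg (ae_one_add_mul_rpow_nonneg hμ hρ)
          (integrable_one_add_mul_rpow_neg hμ hs hρ) _

lemma measureReal_Iic_inv_isBigO_meanDistortion (hμ : ∀ᵐ x ∂μ, 0 ≤ x) (hs : 0 ≤ s) :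
    (fun ρ : ℝ => μ.real (Iic ρ⁻¹)) =O[atTop] meanDistortion μ s := by
  refine .of_bound ((2 : ℝ) ^ (-s))⁻¹ ?_
  filter_upwards [eventually_gt_atTop 0] with ρ hρ
  have hmarkov := rpow_neg_mul_measureReal_Iic_le_meanDistortion hμ hs hρ.le
    (inv_nonneg.2 hρ.le)
  rw [mul_inv_cancel₀ hρ.ne', one_add_one_eq_two] at hmarkov
  rw [norm_of_nonneg measureReal_nonneg, le_inv_mul_iff₀ (by positivity)]
  exact hmarkov.trans (le_norm_self _)

theorem hasSNRExponent_meanDistortion [NeZero μ] (hμ : ∀ᵐ x ∂μ, 0 < x) (hs : 0 < s) (hm : 0 < m)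
    (hmoment : ∀ t ∈ Ioo 0 m, Integrable (fun x : ℝ => x ^ (-t)) μ)
    (houtage : (fun a : ℝ => a ^ m) =O[𝓝[>] 0] fun a => μ.real (Iic a)) :
    HasSNRExponent (meanDistortion μ s) (min s m) := by
  have hμ' : ∀ᵐ x ∂μ, 0 ≤ x := hμ.mono fun _ => le_of_lt
  apply hasSNRExponent_of_isBigO
  · rcases min_choice s m with h | h <;> rw [h]
    · exact rpow_neg_isBigO_meanDistortion hμ' hs.le
    · refine .trans ?_ (measureReal_Iic_inv_isBigO_meanDistortion hμ' hs.le)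
      refine (houtage.comp_tendsto tendsto_inv_atTop_nhdsGT_zero).congr' ?_ .rfl
      filter_upwards [eventually_ge_atTop 0] with ρ hρ
      rw [Function.comp_apply, inv_rpow hρ, rpow_neg hρ]
  · filter_upwards [Ioo_mem_nhdsLT (lt_min hs hm)] with t ⟨ht₀, ht⟩
    exact meanDistortion_isBigO_rpow_neg hμ ht₀.le (ht.le.trans (min_le_left _ _))
      (hmoment t ⟨ht₀, ht.trans_le (min_le_right _ _)⟩)

end MeanDistortion

section Exponential

variable {r t : ℝ}

lemma expMeasure_eq_withDensity_restrict_Ioi (r : ℝ) :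
    expMeasure r = (volume.restrict (Ioi 0)).withDensity
      fun x => ENNReal.ofReal (r * Real.exp (-(r * x))) := by
  have hpdf : exponentialPDF r =
      (Ici 0).indicator fun x => ENNReal.ofReal (r * Real.exp (-(r * x))) := by
    ext x
    by_cases hx : 0 ≤ x <;> simp [exponentialPDF_eq, indicator, hx]
  calc expMeasure r = volume.withDensity (exponentialPDF r) := rfl
    _ = _ := by rw [hpdf, withDensity_indicator measurableSet_Ici, restrict_Ioi_eq_restrict_Ici]

lemma ae_expMeasure_pos (r : ℝ) : ∀ᵐ x ∂expMeasure r, 0 < x := by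
  rw [expMeasure_eq_withDensity_restrict_Ioi]
  exact (withDensity_absolutelyContinuous _ _).ae_le (ae_restrict_mem measurableSet_Ioi)

lemma integral_expMeasure (hr : 0 ≤ r) (f : ℝ → ℝ) :
    ∫ x, f x ∂expMeasure r = ∫ x in Ioi 0, f x * (r * Real.exp (-(r * x))) := by
  rw [expMeasure_eq_withDensity_restrict_Ioi,
    integral_withDensity_eq_integral_toReal_smul (by fun_prop) (by simp)]
  congr with x
  rw [ENNReal.toReal_ofReal (by positivity), smul_eq_mul, mul_comm]

lemma integrable_rpow_neg_expMeasure (hr : 0 < r) (ht : t < 1) :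
    Integrable (fun x : ℝ => x ^ (-t)) (expMeasure r) := by
  rw [expMeasure_eq_withDensity_restrict_Ioi, integrable_withDensity_iff (by fun_prop) (by simp)]
  have h := (integrableOn_rpow_mul_exp_neg_mul_rpow (neg_lt_neg ht) one_pos hr).const_mul r
  refine h.congr (.of_forall fun x => ?_)
  beta_reduce
  rw [ENNReal.toReal_ofReal (by positivity), rpow_one, neg_mul]
  ring

lemma measureReal_expMeasure_Iic (hr : 0 < r) {a : ℝ} (ha : 0 ≤ a) :
    (expMeasure r).real (Iic a) = 1 - Real.exp (-(r * a)) := by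
  have := isProbabilityMeasure_expMeasure hr
  rw [← cdf_eq_real, cdf_expMeasure_eq hr, if_pos ha]

lemma id_isBigO_measureReal_expMeasure_Iic (hr : 0 < r) :
    (fun a : ℝ => a) =O[𝓝[>] 0] fun a => (expMeasure r).real (Iic a) := by
  have hderiv : HasDerivAt (fun a => -Real.exp (-(r * a))) (r * Real.exp (-(r * 0))) 0 :=
    hasDerivAt_neg_exp_mul_exp
  have htendsto : Tendsto (fun a : ℝ => (a, (0 : ℝ))) (𝓝[>] 0) (𝓝 0 ×ˢ pure 0) :=
    Tendsto.prodMk nhdsWithin_le_nhds tendsto_const_pure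
  refine ((hderiv.isTheta_sub (by positivity)).isBigO_symm.comp_tendsto htendsto).congr'
    (.of_forall fun a => sub_zero a) ?_
  filter_upwards [self_mem_nhdsWithin] with a ha
  rw [measureReal_expMeasure_Iic hr (le_of_lt ha), Function.comp_apply, mul_zero, neg_zero,
    exp_zero]
  ring

end Exponential

theorem siso_snr_exponent_general {μ : Measure ℝ} [IsFiniteMeasure μ] [NeZero μ] {s m η τ : ℝ}
    (hμ : ∀ᵐ x ∂μ, 0 < x) (hm : 0 < m)
    (hmoment : ∀ t ∈ Ioo 0 m, Integrable (fun x : ℝ => x ^ (-t)) μ)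
    (houtage : (fun a : ℝ => a ^ m) =O[𝓝[>] 0] fun a => μ.real (Iic a))
    (hs : 0 < s) (hη : 0 < η) (hτ : 0 < τ) :
    HasSNRExponent (meanDistortion μ s) (min s m) ∧
      HasSNRExponent (fun ρ => meanDistortion μ (η / τ) ρ ^ τ) (min η (τ * m)) := by
  refine ⟨hasSNRExponent_meanDistortion hμ hs hm hmoment houtage, ?_⟩
  have hητ : 0 < η / τ := div_pos hη hτ
  have hpos : ∀ᶠ ρ in atTop, 0 < meanDistortion μ (η / τ) ρ :=
    (eventually_ge_atTop 0).mono fun ρ hρ =>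
      meanDistortion_pos (hμ.mono fun _ => le_of_lt) hητ.le hρ
  have hmin : min η (τ * m) = τ * min (η / τ) m := by
    rw [mul_min_of_nonneg _ _ hτ.le, mul_div_cancel₀ _ hτ.ne']
  rw [hmin]
  exact (hasSNRExponent_meanDistortion hμ hητ hm hmoment houtage).rpow_const hpos τ

/-- **SISO distortion SNR exponent.** For every `s > 0`,
`lim_{ρ→∞} -ln(∫₀^∞ (1+ρx)^{-s} e^{-x} dx)/ln ρ = min(s,1)`; consequently, for
bandwidth ratio `η > 0` and normalized delay `τₙ > 0` (so `s = η/τₙ`), the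
buffered distortion `D(ρ) = (∫₀^∞ (1+ρx)^{-η/τₙ} e^{-x} dx)^{τₙ}` satisfies
`lim_{ρ→∞} -ln D(ρ)/ln ρ = min(η, τₙ)`. -/
theorem siso_snr_exponent (s : ℝ) (hs : 0 < s) (η τ : ℝ) (hη : 0 < η) (hτ : 0 < τ) :
    Tendsto
      (fun ρ : ℝ =>
        -Real.log (∫ x in Ioi (0:ℝ), (1 + ρ * x) ^ (-s) * Real.exp (-x)) / Real.log ρ)
      atTop (nhds (min s 1)) ∧
    Tendsto
      (fun ρ : ℝ =>
        -Real.log ((∫ x in Ioi (0:ℝ), (1 + ρ * x) ^ (-(η / τ)) * Real.exp (-x)) ^ τ) /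
          Real.log ρ)
      atTop (nhds (min η τ)) := by
  have := isProbabilityMeasure_expMeasure one_pos
  simpa [HasSNRExponent, meanDistortion, integral_expMeasure] using
    siso_snr_exponent_general (ae_expMeasure_pos 1) one_pos
      (fun t ht => integrable_rpow_neg_expMeasure one_pos ht.2)
      (by simpa only [rpow_one] using id_isBigO_measureReal_expMeasure_Iic one_pos) hs hη hτ
end
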